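/- For all positive integers k, d and every real ε > 0, there exists a digraph D = (V, A) with the following properties: (i) D is acyclic (it contains no directed cycle); (ii) the underlying graph of D is bipartite; (iii) Δ⁻(D) ≤ k+1; (iv) |A[X]| < (k + (d−k)/(d+1) + ε)·|X| for every nonempty X ⊆ V (i.e. (1/2)·mad(D) < k + (d−k)/(d+1) + ε); and (v) A cannot be partitioned into k+1 pseudo-branchings C₁, …, C_k, C_{k+1} with Δ⁺(C_{k+1}) ≤ d. -/

import Mathlib

/-!
Take `s` sources and `n = d * s + 1` sinks, with `k + 1` arcs from sources into each sink. In a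
decomposition into `k + 1` pseudo-branchings every class enters every sink, so the last one has
more than `d * s` arcs, and some source is the tail of more than `d` of them.

The sources of the arcs are chosen so that no subgraph is denser than the whole digraph. Cut a row
of `n * s` cells into `n` blocks of length `s`, one per sink, and also into `s` blocks of length
`n`, one per source. As `s ≤ n`, the block of a sink meets at most two blocks of sources, and its
`k + 1` arcs can be distributed over these two so that a source covering `x` cells of the sink
receives at least `(k + 1) * x / (n + s)` of them. Discharging that amount from the sink to the
source leaves the load `(k + 1) * n / (n + s)` on every vertex. As `s` grows, this density tends to
`(k + 1) * d / (d + 1) = k + (d - k) / (d + 1)`.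
-/

open Finset

theorem not_transGen_self_of_mem_of_notMem {α : Type*} {r : α → α → Prop} {P : Set α}
    (hr : ∀ u w, r u w → u ∈ P ∧ w ∉ P) (v : α) : ¬ Relation.TransGen r v v := by
  intro h
  obtain ⟨_, hout, -⟩ := Relation.TransGen.head'_iff.1 h
  obtain ⟨_, -, hin⟩ := Relation.TransGen.tail'_iff.1 h
  exact (hr _ _ hin).2 (hr _ _ hout).1

section PseudoBranching

variable {A V ι : Type*} {tail head : A → V}

/-- A pseudo-branching of a digraph with finitely many arcs: a set `C` of arcs, at most one of which
enters each vertex. Only the heads of the arcs matter, so `tail` is not a parameter. -/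
def IsPseudoBranching (head : A → V) (C : Set A) : Prop :=
  ∀ v, {a | a ∈ C ∧ head a = v}.ncard ≤ 1

variable [Finite A] [Finite ι] {C : ι → Set A}

theorem exists_mem_head_eq_of_card_le_inDegree (hcover : ⋃ i, C i = Set.univ)
    (hC : ∀ i, IsPseudoBranching head (C i)) {v : V}
    (hv : Nat.card ι ≤ {a | head a = v}.ncard) (i : ι) : ∃ a ∈ C i, head a = v := by
  have hclass (a : {a | head a = v}) : ∃ i, a.1 ∈ C i :=
    Set.mem_iUnion.1 (hcover ▸ Set.mem_univ a.1)
  choose c hc using hclass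
  have hinj : Function.Injective c := fun a b hab =>
    Subtype.ext <| (Set.ncard_le_one (Set.toFinite _)).1 (hC (c a) v) a ⟨hc a, a.2⟩
      b ⟨hab ▸ hc b, b.2⟩
  obtain ⟨a, rfl⟩ := (hinj.bijective_of_nat_card_le hv).surjective i
  exact ⟨a, hc a, a.2⟩

theorem exists_lt_outDegree_of_mul_card_lt (hcover : ⋃ i, C i = Set.univ)
    (hC : ∀ i, IsPseudoBranching head (C i)) {S T : Finset V} (htail : ∀ a, tail a ∈ S)
    (hT : ∀ v ∈ T, Nat.card ι ≤ {a | head a = v}.ncard) {d : ℕ} (hcard : d * #S < #T) (i : ι) :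
    ∃ v, d < {a | a ∈ C i ∧ tail a = v}.ncard := by
  classical
  have hsurj : (T : Set V) ⊆ head '' C i := fun v hv =>
    exists_mem_head_eq_of_card_le_inDegree hcover hC (hT v hv) i
  have hle : #T ≤ (C i).ncard := by
    rw [← Set.ncard_coe_finset]
    exact (Set.ncard_le_ncard hsurj (Set.toFinite _)).trans (Set.ncard_image_le (Set.toFinite _))
  obtain ⟨B, hB⟩ := (C i).toFinite.exists_finset_coe
  rw [← hB, Set.ncard_coe_finset] at hle
  rw [mul_comm] at hcard
  obtain ⟨v, -, hv⟩ := exists_lt_card_fiber_of_mul_lt_card_of_maps_to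
    (fun a _ => htail a) (hcard.trans_le hle)
  refine ⟨v, ?_⟩
  simpa only [← Set.ncard_coe_finset, coe_filter, ← mem_coe, hB] using hv

end PseudoBranching

section BipartiteDigraph

variable {S T J : Type*}

/-- The tail map of the bipartite digraph with sources `S` and sinks `T` encoded by a family
`f : T → J → S`: the arcs into the sink `t` are the pairs `(t, j)`, and `f t j` is the tail of
`(t, j)`. Several arcs from one source to one sink are allowed. -/
def arcTail (f : T → J → S) (a : T × J) : S ⊕ T :=
  Sum.inl (f a.1 a.2)

/-- The head map of the bipartite digraph whose tail map is `arcTail f`; it does not depend on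
`f`. -/
def arcHead (a : T × J) : S ⊕ T :=
  Sum.inr a.1

theorem ncard_arcHead_eq_inr (t : T) :
    {a : T × J | (arcHead a : S ⊕ T) = Sum.inr t}.ncard = Nat.card J := by
  have : {a : T × J | (arcHead a : S ⊕ T) = Sum.inr t} = {t} ×ˢ Set.univ := by
    ext a
    simp [arcHead]
  rw [this, Set.ncard_prod, Set.ncard_singleton, Set.ncard_univ, one_mul]

theorem ncard_arcHead_eq_le (v : S ⊕ T) : {a : T × J | arcHead a = v}.ncard ≤ Nat.card J := by
  rcases v with i | t
  · simp [arcHead]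
  · exact (ncard_arcHead_eq_inr t).le

theorem ncard_arcs_induced [DecidableEq S] [Fintype J] (f : T → J → S) (X : Finset (S ⊕ T)) :
    {a | arcTail f a ∈ X ∧ arcHead a ∈ X}.ncard =
      ∑ t ∈ X.toRight, #{j | f t j ∈ X.toLeft} := by
  have : {a | arcTail f a ∈ X ∧ arcHead a ∈ X} =
      ((X.toRight ×ˢ univ).filter fun a => f a.1 a.2 ∈ X.toLeft : Finset (T × J)) := by
    ext a
    simp [arcTail, arcHead, and_comm]
  rw [this, Set.ncard_coe_finset]
  simp only [card_filter, sum_product]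

end BipartiteDigraph

section Discharging

variable {S T J β : Type*} [DecidableEq S] [Fintype J] [Fintype β]

theorem mul_card_filter_le_mul_card_filter {p : β → S} {f : J → S} {b c : ℕ}
    (h : ∀ i, b * #{y | p y = i} ≤ c * #{j | f j = i}) (P : S → Prop) [DecidablePred P] :
    b * #{y | P (p y)} ≤ c * #{j | P (f j)} := by
  let Y := (univ.image p).filter P
  have hp : #{y | P (p y)} = ∑ i ∈ Y, #{y | p y = i} := by
    rw [sum_card_fiberwise_eq_card_filter]
    simp [Y]
  have hf : ∑ i ∈ Y, #{j | f j = i} ≤ #{j | P (f j)} := by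
    rw [sum_card_fiberwise_eq_card_filter]
    exact card_le_card (monotone_filter_right _ fun j _ hj => (mem_filter.1 hj).2)
  calc b * #{y | P (p y)} = ∑ i ∈ Y, b * #{y | p y = i} := by rw [hp, mul_sum]
    _ ≤ ∑ i ∈ Y, c * #{j | f j = i} := sum_le_sum fun i _ => h i
    _ = c * ∑ i ∈ Y, #{j | f j = i} := (mul_sum _ _ _).symm
    _ ≤ c * #{j | P (f j)} := Nat.mul_le_mul_left c hf

theorem mul_card_filter_mem_le_mul_add {p : β → S} {f : J → S} {c : ℕ}
    (h : ∀ i, Fintype.card J * #{y | p y = i} ≤ (c + Fintype.card β) * #{j | f j = i})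
    (Y : Finset S) :
    (c + Fintype.card β) * #{j | f j ∈ Y} ≤ Fintype.card J * (c + #{y | p y ∈ Y}) := by
  have hcompl := mul_card_filter_le_mul_card_filter h (· ∉ Y)
  have hβ := card_filter_add_card_filter_not (s := univ) (fun y => p y ∈ Y)
  have hJ := card_filter_add_card_filter_not (s := univ) (fun j => f j ∈ Y)
  rw [card_univ] at hβ hJ
  rw [← hβ, ← hJ] at hcompl ⊢
  linarith

theorem mul_sum_card_filter_mem_le [Fintype T] {p : T → β → S} {f : T → J → S} {c : ℕ}
    (h : ∀ t i, Fintype.card J * #{y | p t y = i} ≤ (c + Fintype.card β) * #{j | f t j = i})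
    (hp : ∀ i, #{x : T × β | p x.1 x.2 = i} ≤ c) (X : Finset T) (Y : Finset S) :
    (c + Fintype.card β) * ∑ t ∈ X, #{j | f t j ∈ Y} ≤ Fintype.card J * (c * (#X + #Y)) := by
  have hY : ∑ t ∈ X, #{y | p t y ∈ Y} ≤ c * #Y := calc
    ∑ t ∈ X, #{y | p t y ∈ Y} ≤ ∑ t, #{y | p t y ∈ Y} :=
      sum_le_sum_of_subset (subset_univ X)
    _ = #{x : T × β | p x.1 x.2 ∈ Y} := by
      simp only [card_filter, ← univ_product_univ, sum_product]
    _ = ∑ i ∈ Y, #{x : T × β | p x.1 x.2 = i} :=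
      (sum_card_fiberwise_eq_card_filter _ _ _).symm
    _ ≤ c * #Y := by
      rw [mul_comm]
      exact sum_le_card_nsmul _ _ _ fun i _ => hp i
  calc (c + Fintype.card β) * ∑ t ∈ X, #{j | f t j ∈ Y}
      ≤ ∑ t ∈ X, Fintype.card J * (c + #{y | p t y ∈ Y}) := by
        rw [mul_sum]
        exact sum_le_sum fun t _ => mul_card_filter_mem_le_mul_add (h t) Y
    _ = Fintype.card J * (c * #X + ∑ t ∈ X, #{y | p t y ∈ Y}) := by
        rw [← mul_sum, sum_add_distrib, sum_const, smul_eq_mul, mul_comm c]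
    _ ≤ Fintype.card J * (c * (#X + #Y)) := by
        rw [mul_add c]
        gcongr

end Discharging

section Construction

theorem exists_add_eq_mul_le_mul {m N x y : ℕ} (hm : 2 ≤ m) (hN : 2 * (x + y) ≤ N) :
    ∃ u v, u + v = m ∧ m * x ≤ N * u ∧ m * y ≤ N * v := by
  -- The demands `m * x / N` and `m * y / N` add up to at most `m / 2 ≤ m - 1`, so there is room to
  -- round the first of them up.
  have hslack : m * x + m * y + N ≤ N * m := by nlinarith
  have hex : ∃ u, m * x ≤ N * u := ⟨m, by lia⟩
  obtain ⟨u, hu, hmin⟩ : ∃ u, m * x ≤ N * u ∧ ∀ w < u, N * w < m * x :=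
    ⟨Nat.find hex, Nat.find_spec hex, fun w hw => not_le.1 (Nat.find_min hex hw)⟩
  have hum : u ≤ m := by
    by_contra! hlt
    have := hmin m hlt
    lia
  obtain ⟨v, rfl⟩ := Nat.exists_eq_add_of_le hum
  refine ⟨u, v, rfl, hu, ?_⟩
  have hu_lt : N * u ≤ (u + v) * x + N := by
    rcases u with _ | w
    · lia
    · have := hmin w (Nat.lt_succ_self w)
      lia
  rw [mul_add N] at hslack
  lia

theorem card_fiber_append_const {S : Type*} [DecidableEq S] (u v : ℕ) (a b i : S) :
    #{j | Fin.append (fun _ : Fin u => a) (fun _ : Fin v => b) j = i} =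
      (if a = i then u else 0) + (if b = i then v else 0) := by
  simp only [card_filter, Fin.sum_univ_add, Fin.append_left, Fin.append_right, sum_const, card_univ,
    Fintype.card_fin, smul_eq_mul, mul_ite, mul_one, mul_zero]

theorem exists_mul_card_fiber_le {S β : Type*} [DecidableEq S] [Fintype β] {m N : ℕ} (hm : 2 ≤ m)
    (hN : 2 * Fintype.card β ≤ N) {p : β → S} {a b : S} (hp : ∀ y, p y = a ∨ p y = b) :
    ∃ f : Fin m → S, ∀ i, m * #{y | p y = i} ≤ N * #{j | f j = i} := by
  have hβ := card_filter_add_card_filter_not (s := univ) (fun y => p y = a)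
  rw [card_univ] at hβ
  obtain ⟨u, v, rfl, hu, hv⟩ := exists_add_eq_mul_le_mul hm (hβ ▸ hN)
  refine ⟨Fin.append (fun _ => a) (fun _ => b), fun i => ?_⟩
  rw [card_fiber_append_const]
  by_cases hia : a = i
  · subst hia
    rw [if_pos rfl]
    exact hu.trans (Nat.mul_le_mul_left N (Nat.le_add_right _ _))
  by_cases hib : b = i
  · subst hib
    have hpb : #{y | p y = b} ≤ #{y | ¬ p y = a} :=
      card_le_card (monotone_filter_right _ fun y _ hy => hy ▸ Ne.symm hia)
    rw [if_neg hia, if_pos rfl, zero_add]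
    exact (Nat.mul_le_mul_left _ hpb).trans hv
  · have hpi : #{y | p y = i} = 0 := by
      rw [card_eq_zero, filter_eq_empty_iff]
      rintro y - rfl
      exact (hp y).elim (fun h => hia h.symm) (fun h => hib h.symm)
    rw [hpi, mul_zero]
    exact Nat.zero_le _

/-- The bijection between two ways of cutting a row of `n * s` cells into blocks: the `y`-th cell of
the `t`-th block of length `s` is sent to its coordinates with respect to blocks of length `n`. -/
def reblock (n s : ℕ) : Fin n × Fin s ≃ Fin s × Fin n :=
  finProdFinEquiv.trans ((finCongr (mul_comm n s)).trans finProdFinEquiv.symm)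

theorem reblock_fst_val {n s : ℕ} (t : Fin n) (y : Fin s) :
    ((reblock n s (t, y)).1 : ℕ) = (y + s * t) / n :=
  rfl

theorem card_reblock_fst_eq {n s : ℕ} (i : Fin s) :
    #{x : Fin n × Fin s | (reblock n s x).1 = i} = n := by
  calc #{x : Fin n × Fin s | (reblock n s x).1 = i}
      = #{z : Fin s × Fin n | z.1 = i} :=
        card_equiv (reblock n s) (by simp)
    _ = #({i} ×ˢ univ : Finset (Fin s × Fin n)) := by
        congr 1
        ext ⟨_, _⟩
        simp [eq_comm]
    _ = n := by simp

theorem exists_reblock_fst_eq_or_eq {n s : ℕ} (hs : 0 < s) (hsn : s ≤ n) (t : Fin n) :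
    ∃ a b, ∀ y, (reblock n s (t, y)).1 = a ∨ (reblock n s (t, y)).1 = b := by
  refine ⟨(reblock n s (t, ⟨0, hs⟩)).1, (reblock n s (t, ⟨s - 1, by lia⟩)).1, fun y => ?_⟩
  simp only [Fin.ext_iff, reblock_fst_val]
  have hlow : (0 + s * t) / n ≤ (y + s * t) / n := Nat.div_le_div_right (by lia)
  have hhigh : (y + s * t) / n ≤ (s - 1 + s * t) / n := Nat.div_le_div_right (by lia)
  have hgap : (s - 1 + s * t) / n ≤ (0 + s * t) / n + 1 := by
    rw [← Nat.add_div_right _ (hs.trans_le hsn)]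
    exact Nat.div_le_div_right (by lia)
  lia

theorem exists_balanced_arcTail {m n s : ℕ} (hm : 2 ≤ m) (hs : 0 < s) (hsn : s ≤ n) :
    ∃ f : Fin n → Fin m → Fin s, ∀ X : Finset (Fin s ⊕ Fin n),
      (n + s) * {a | arcTail f a ∈ X ∧ arcHead a ∈ X}.ncard ≤ m * n * #X := by
  have hrow (t : Fin n) : ∃ f : Fin m → Fin s, ∀ i,
      m * #{y | (reblock n s (t, y)).1 = i} ≤ (n + s) * #{j | f j = i} := by
    obtain ⟨a, b, hab⟩ := exists_reblock_fst_eq_or_eq hs hsn t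
    exact exists_mul_card_fiber_le hm (by rw [Fintype.card_fin]; lia) hab
  choose f hf using hrow
  refine ⟨f, fun X => ?_⟩
  rw [ncard_arcs_induced, ← card_toLeft_add_card_toRight, add_comm (#X.toLeft), mul_assoc]
  simpa using mul_sum_card_filter_mem_le (p := fun t y => (reblock n s (t, y)).1) (f := f) (c := n)
    (by simpa using hf) (fun i => (card_reblock_fst_eq i).le) X.toRight X.toLeft

end Construction

theorem exists_pos_density_lt (k d : ℕ) {ε : ℝ} (hε : 0 < ε) :
    ∃ s : ℕ, 0 < s ∧
      ((k + 1) * (d * s + 1) : ℝ) / (d * s + 1 + s) < k + ((d : ℝ) - k) / (d + 1) + ε := by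
  obtain ⟨s, hs⟩ := exists_nat_gt ((k + 1) / ε)
  have hspos : (0 : ℝ) < s := lt_of_le_of_lt (by positivity) hs
  refine ⟨s, by exact_mod_cast hspos, ?_⟩
  rw [div_lt_iff₀ hε] at hs
  have hexcess : (k + 1) * (d * s + 1) - (k + ((d : ℝ) - k) / (d + 1)) * (d * s + 1 + s) =
      (k + 1) / (d + 1) := by
    field_simp
    ring
  have hsmall : ((k : ℝ) + 1) / (d + 1) ≤ k + 1 :=
    div_le_self (by positivity) (by linarith [d.cast_nonneg (α := ℝ)])
  have hε' : s * ε ≤ (d * s + 1 + s) * ε := by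
    gcongr
    linarith [show (0 : ℝ) ≤ d * s by positivity]
  rw [div_lt_iff₀ (by positivity)]
  linarith

/-- sharpness of the maximum average degree bound for the
pseudo-branching version of the Nine Dragon Tree conjecture for digraphs. -/
theorem stmt13 (k d : ℕ) (hk : 0 < k) (hd : 0 < d) (ε : ℝ) (hε : 0 < ε) :
    ∃ (V A : Type) (_ : Fintype V) (_ : Fintype A) (tail head : A → V),
      (∀ a : A, tail a ≠ head a) ∧
      -- acyclic: no directed cycle
      (∀ v : V, ¬ Relation.TransGen (fun u w : V => ∃ a : A, tail a = u ∧ head a = w) v v) ∧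
      -- underlying graph bipartite
      (∃ P : Set V, ∀ a : A,
        (tail a ∈ P ∧ head a ∉ P) ∨ (tail a ∉ P ∧ head a ∈ P)) ∧
      -- max in-degree at most k+1
      (∀ v : V, {a : A | head a = v}.ncard ≤ k + 1) ∧
      -- (1/2)·mad(D) < k + (d-k)/(d+1) + ε
      (∀ X : Set V, X.Nonempty →
        ({a : A | tail a ∈ X ∧ head a ∈ X}.ncard : ℝ)
          < ((k : ℝ) + ((d : ℝ) - (k : ℝ)) / ((d : ℝ) + 1) + ε) * (X.ncard : ℝ)) ∧
      -- no decomposition into k+1 pseudo-branchings, the last of which has Δ⁺ ≤ d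
      ¬ ∃ C : Fin (k + 1) → Set A,
          (∀ i j, i ≠ j → Disjoint (C i) (C j)) ∧
          (⋃ i, C i) = Set.univ ∧
          (∀ i, ∀ v : V, {a : A | a ∈ C i ∧ head a = v}.ncard ≤ 1) ∧
          (∀ v : V, {a : A | a ∈ C (Fin.last k) ∧ tail a = v}.ncard ≤ d) := by
  obtain ⟨s, hs, hdensity⟩ := exists_pos_density_lt k d hε
  obtain ⟨f, hf⟩ := exists_balanced_arcTail (m := k + 1) (n := d * s + 1) (by lia) hs (by nlinarith)
  let P : Set (Fin s ⊕ Fin (d * s + 1)) := Set.range Sum.inl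
  have hside (a) : arcTail f a ∈ P ∧ arcHead a ∉ P := by simp [P, arcTail, arcHead]
  refine ⟨Fin s ⊕ Fin (d * s + 1), Fin (d * s + 1) × Fin (k + 1), inferInstance, inferInstance,
    arcTail f, arcHead, fun a => Sum.inl_ne_inr, ?_, ⟨P, fun a => Or.inl (hside a)⟩, ?_, ?_, ?_⟩
  · refine not_transGen_self_of_mem_of_notMem (P := P) ?_
    rintro _ _ ⟨a, rfl, rfl⟩
    exact hside a
  · simpa using ncard_arcHead_eq_le (S := Fin s) (T := Fin (d * s + 1)) (J := Fin (k + 1))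
  · intro X hX
    lift X to Finset (Fin s ⊕ Fin (d * s + 1)) using X.toFinite
    rw [Set.ncard_coe_finset]
    refine lt_of_le_of_lt ?_ (mul_lt_mul_of_pos_right hdensity (by simpa [card_pos] using hX))
    rw [div_mul_eq_mul_div, le_div_iff₀' (by positivity)]
    exact_mod_cast hf X
  · rintro ⟨C, -, hcover, hin, hout⟩
    obtain ⟨v, hv⟩ := exists_lt_outDegree_of_mul_card_lt (tail := arcTail f) hcover hin
      (S := univ.map .inl) (T := univ.map .inr) (d := d) (by simp [arcTail])
      (by simp [ncard_arcHead_eq_inr]) (by simp) (Fin.last k)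
    exact hv.not_ge (hout v)
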